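/- There is a constant C > 0 such that for every n ≥ 3, the diagonal online Ramsey number satisfies r̃(n,n) ≥ 2^((2−√2)n − C). -/

import Mathlib

open scoped Classical

namespace OnlineRamseyGame

/-- A valid Builder strategy: it never builds a loop, and along any play the
edges built are pairwise distinct. -/
def ValidBuilder {V : Type*} (B : List Bool → Sym2 V) : Prop :=
  (∀ h : List Bool, ¬ (B h).IsDiag) ∧
  ∀ h : List Bool, ∀ i : ℕ, i < h.length → B (h.take i) ≠ B h

/-- The history of Painter's colors after `t` turns against Painter strategy `P`
(Builder's moves are determined by this history). -/
def histOf (P : List Bool → Bool) : ℕ → List Bool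
  | 0 => []
  | t + 1 => histOf P t ++ [P (histOf P t)]

/-- The graph built by `edge` contains a monochromatic clique on `k` vertices in
color `col` within the first `N` turns. -/
def HasMonoClique {V : Type*} (edge : ℕ → Sym2 V) (color : ℕ → Bool)
    (N k : ℕ) (col : Bool) : Prop :=
  ∃ S : Finset V, S.card = k ∧
    ∀ u ∈ S, ∀ v ∈ S, u ≠ v → ∃ t, t < N ∧ edge t = s(u, v) ∧ color t = col

/-- Builder has a valid strategy winning the `(m,n)` online Ramsey game within `N`
turns against every Painter strategy (red = `true`, blue = `false`). -/
def BuilderWins (m n N : ℕ) : Prop :=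
  ∃ B : List Bool → Sym2 ℕ, ValidBuilder B ∧
    ∀ P : List Bool → Bool,
      HasMonoClique (fun t => B (histOf P t)) (fun t => P (histOf P t)) N m true ∨
      HasMonoClique (fun t => B (histOf P t)) (fun t => P (histOf P t)) N n false

/-- The online Ramsey number `r̃(m,n)`: the least `N` such that Builder can
guarantee a win within `N` turns. -/
noncomputable def onlineRamsey (m n : ℕ) : ℕ := sInf {N | BuilderWins m n N}

/-!
Let Painter color by a fixed sequence, independent of what Builder does, and let a gambler bet on
the colors of the edges as they are built. If the clique completed by Builder has `n` vertices,
pair up `2 * k` of them so that the pair edges are built as early as possible, and reveal in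
advance the times of these `k` edges and of the first clique edge at each of the other `n - 2 * k`
vertices. When an edge of the clique is about to be built, both its endpoints are already covered
by earlier revealed edges, with at most `k ^ 2 + (n - 2 * k)` exceptions: by an exchange argument,
of the two edges of a perfect matching between two of the pairs, at most one is exceptional.
A gambler who knows the `n - k` revealed times and the color of the clique, and who stakes his
whole capital on that color whenever both endpoints are covered, thus multiplies his capital by at
least `2 ^ (n.choose 2 - k ^ 2 - (n - 2 * k))`. A fair game preserves the capital on average over
all color sequences, so this factor is at most the number `2 * N ^ (n - k)` of gamblers. The choice
`k = (1 - √2 / 2) * n` optimizes the resulting lower bound on `N`.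
-/

open Finset

section Ramsey

theorem exists_isNClique_or_isNClique_compl {V : Type*} (G : SimpleGraph V) (a b : ℕ)
    {X : Finset V} (hX : (a + b).choose a ≤ #X) :
    (∃ S ⊆ X, G.IsNClique a S) ∨ ∃ S ⊆ X, Gᶜ.IsNClique b S := by
  induction a generalizing b X with
  | zero => exact .inl ⟨∅, by simp⟩
  | succ a iha =>
    induction b generalizing X with
    | zero => exact .inr ⟨∅, by simp⟩
    | succ b ihb =>
      obtain ⟨x, hx⟩ : X.Nonempty :=
        card_pos.1 ((Nat.choose_pos (Nat.le_add_right _ _)).trans_le hX)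
      have hpascal : (a + 1 + (b + 1)).choose (a + 1)
          = (a + (b + 1)).choose a + (a + 1 + b).choose (a + 1) := by
        rw [show a + 1 + (b + 1) = (a + 1 + b) + 1 by ring, Nat.choose_succ_succ,
          show a + (b + 1) = a + 1 + b by ring]
      have hsplit := card_filter_add_card_filter_not (s := X.erase x) fun y => G.Adj x y
      rw [card_erase_of_mem hx] at hsplit
      have hsub (p : V → Prop) [DecidablePred p] : {y ∈ X.erase x | p y} ⊆ X :=
        (filter_subset _ _).trans (erase_subset _ _)
      by_cases hnbr : (a + (b + 1)).choose a ≤ #{y ∈ X.erase x | G.Adj x y}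
      · obtain ⟨S, hS, hclique⟩ | ⟨S, hS, hclique⟩ := iha (b + 1) hnbr
        · exact .inl ⟨insert x S, insert_subset hx (hS.trans (hsub _)),
            hclique.insert fun y hy => (mem_filter.1 (hS hy)).2⟩
        · exact .inr ⟨S, hS.trans (hsub _), hclique⟩
      · have hnonnbr : (a + 1 + b).choose (a + 1) ≤ #{y ∈ X.erase x | ¬ G.Adj x y} := by omega
        obtain ⟨S, hS, hclique⟩ | ⟨S, hS, hclique⟩ := ihb hnonnbr
        · exact .inl ⟨S, hS.trans (hsub _), hclique⟩
        · refine .inr ⟨insert x S, insert_subset hx (hS.trans (hsub _)),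
            hclique.insert fun y hy => ?_⟩
          have hy := mem_filter.1 (hS hy)
          exact (G.compl_adj x y).2 ⟨(ne_of_mem_erase hy.1).symm, hy.2⟩

theorem length_histOf (P : List Bool → Bool) (t : ℕ) : (histOf P t).length = t := by
  induction t with
  | zero => rfl
  | succ t ih => simp [histOf, ih]

theorem hasMonoClique_of_isNClique {V : Type*} {edge : ℕ → Sym2 V} {color : ℕ → Bool}
    {N k : ℕ} {col : Bool} {G : SimpleGraph V} {X S : Finset V} (hSX : S ⊆ X)
    (hS : G.IsNClique k S)
    (hG : ∀ u ∈ X, ∀ v ∈ X, G.Adj u v → ∃ t < N, edge t = s(u, v) ∧ color t = col) :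
    HasMonoClique edge color N k col :=
  ⟨S, hS.card_eq, fun u hu v hv huv => hG u (hSX hu) v (hSX hv) (hS.isClique hu hv huv)⟩

theorem exists_equiv_nat_nonloops : Nonempty (ℕ ≃ {e : Sym2 ℕ // ¬ e.IsDiag}) := by
  have : Infinite {e : Sym2 ℕ // ¬ e.IsDiag} :=
    .of_injective (fun k : ℕ => ⟨s(0, k + 1), by simp⟩) fun a b hab => by simpa using hab
  exact nonempty_equiv_of_countable

theorem exists_builderWins (m n : ℕ) : ∃ N, BuilderWins m n N := by
  obtain ⟨enum⟩ := exists_equiv_nat_nonloops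
  set X : Finset ℕ := range ((m + n).choose m) with hX
  obtain ⟨N, hN⟩ : ∃ N, ∀ u ∈ X, ∀ v ∈ X, u ≠ v → ∃ t < N, (enum t : Sym2 ℕ) = s(u, v) := by
    obtain ⟨N, hN⟩ := (X.sym2.preimage (fun t => (enum t : Sym2 ℕ))
      (Subtype.val_injective.comp enum.injective).injOn).exists_nat_subset_range
    refine ⟨N, fun u hu v hv huv => ⟨enum.symm ⟨s(u, v), by simpa⟩, ?_, by simp⟩⟩
    exact mem_range.1 (hN (by simp [hu, hv]))
  refine ⟨N, fun h => enum h.length, ⟨fun h => (enum h.length).2, fun h i hi heq => ?_⟩,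
    fun P => ?_⟩
  · have := enum.injective (Subtype.ext heq)
    rw [List.length_take] at this
    omega
  · let G : SimpleGraph ℕ :=
      .fromEdgeSet {e | ∃ t < N, (enum t : Sym2 ℕ) = e ∧ P (histOf P t) = true}
    simp only [length_histOf]
    obtain ⟨S, hSX, hS⟩ | ⟨S, hSX, hS⟩ := exists_isNClique_or_isNClique_compl G m n (X := X)
      (by simp [hX])
    · exact .inl (hasMonoClique_of_isNClique hSX hS fun u _ v _ huv => by
        simpa [G] using huv.1)
    · refine .inr (hasMonoClique_of_isNClique hSX hS fun u hu v hv huv => ?_)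
      obtain ⟨hne, hblue⟩ := (G.compl_adj u v).1 huv
      obtain ⟨t, ht, hedge⟩ := hN u hu v hv hne
      refine ⟨t, ht, hedge, Bool.eq_false_of_not_eq_true fun hred => hblue ?_⟩
      exact (SimpleGraph.fromEdgeSet_adj _).2 ⟨⟨t, ht, hedge, hred⟩, hne⟩

end Ramsey

section Pairing

variable {V ι : Type*} {τ : Sym2 V → ℕ} {x : ι × Bool ↪ V} {i j : ι}

/-- The edge joining the two vertices of the `i`-th pair, when `2 |ι|` vertices of `V` are
arranged into pairs by `x`; the two members of a pair are told apart by a Boolean. -/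
def pairEdge (x : ι × Bool → V) (i : ι) : Sym2 V := s(x (i, false), x (i, true))

theorem pairEdge_eq (x : ι × Bool → V) (i : ι) (p : Bool) :
    pairEdge x i = s(x (i, p), x (i, !p)) := by
  cases p
  · rfl
  · exact Sym2.eq_swap

/-- A pairing of vertices minimizing the total weight of the pair edges, where an edge built at
time `t` weighs `3 ^ t`. Base `3` makes one late edge heavier than any two earlier ones. -/
def IsLightest [Fintype ι] (τ : Sym2 V → ℕ) (x : ι × Bool ↪ V) : Prop :=
  ∀ y : ι × Bool ↪ V, ∑ i, 3 ^ τ (pairEdge x i) ≤ ∑ i, 3 ^ τ (pairEdge y i)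

theorem exists_isLightest [Fintype ι] [Fintype V] (τ : Sym2 V → ℕ)
    (hcard : 2 * Fintype.card ι ≤ Fintype.card V) : ∃ x : ι × Bool ↪ V, IsLightest τ x := by
  have : Nonempty (ι × Bool ↪ V) :=
    Function.Embedding.nonempty_of_card_le (by simpa [mul_comm] using hcard)
  exact Finite.exists_min _

theorem IsLightest.sum_le_sum_of_eq_off [Fintype ι] (hx : IsLightest τ x) (y : ι × Bool ↪ V)
    (F : Finset ι) (hy : ∀ l ∉ F, pairEdge y l = pairEdge x l) :
    ∑ l ∈ F, 3 ^ τ (pairEdge x l) ≤ ∑ l ∈ F, 3 ^ τ (pairEdge y l) := by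
  have hle := hx y
  have hoff : ∑ l ∈ Fᶜ, 3 ^ τ (pairEdge y l) = ∑ l ∈ Fᶜ, 3 ^ τ (pairEdge x l) :=
    sum_congr rfl fun l hl => by rw [hy l (mem_compl.1 hl)]
  rw [← sum_add_sum_compl F, ← sum_add_sum_compl F, hoff] at hle
  exact Nat.le_of_add_le_add_right hle

theorem IsLightest.pairEdge_le_of_notMem_range [Fintype ι] (hx : IsLightest τ x) {v : V}
    (hv : v ∉ Set.range x) (i : ι) (p : Bool) : τ (pairEdge x i) ≤ τ s(v, x (i, p)) := by
  let y := x.trans (Equiv.swap (x (i, !p)) v).toEmbedding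
  have hxv : ∀ a, x a ≠ v := fun a ha => hv ⟨a, ha⟩
  have hyi : pairEdge y i = s(v, x (i, p)) := by
    rw [pairEdge_eq y i (!p)]
    simp [y, Equiv.swap_apply_of_ne_of_ne, hxv]
  have hle := hx.sum_le_sum_of_eq_off y {i} fun l hl => by
    have hl : l ≠ i := by simpa using hl
    simp [y, pairEdge, Equiv.swap_apply_of_ne_of_ne, hl, hxv]
  rw [sum_singleton, sum_singleton, hyi] at hle
  exact (Nat.pow_le_pow_iff_right (by norm_num)).1 hle

theorem le_max_of_three_pow_le {a b s : ℕ} (h : 3 ^ s ≤ 3 ^ a + 3 ^ b) : s ≤ max a b := by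
  have ha : 3 ^ a ≤ 3 ^ max a b := Nat.pow_le_pow_right (by norm_num) (le_max_left a b)
  have hb : 3 ^ b ≤ 3 ^ max a b := Nat.pow_le_pow_right (by norm_num) (le_max_right a b)
  have hlt : 3 ^ s < 3 ^ (max a b + 1) := by
    have : 0 < 3 ^ max a b := by positivity
    omega
  exact Nat.lt_succ_iff.1 ((Nat.pow_lt_pow_iff_right (by norm_num)).1 hlt)

theorem IsLightest.max_pairEdge_le_max_exchange [Fintype ι] (hx : IsLightest τ x) (hij : i ≠ j)
    (p q : Bool) :
    max (τ (pairEdge x i)) (τ (pairEdge x j))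
      ≤ max (τ s(x (i, p), x (j, q))) (τ s(x (i, !p), x (j, !q))) := by
  let y := x.trans (Equiv.swap (x (i, !p)) (x (j, q))).toEmbedding
  have hyi : pairEdge y i = s(x (i, p), x (j, q)) := by
    rw [pairEdge_eq y i p]
    simp [y, Equiv.swap_apply_of_ne_of_ne, hij]
  have hyj : pairEdge y j = s(x (i, !p), x (j, !q)) := by
    rw [pairEdge_eq y j q]
    simp [y, Equiv.swap_apply_of_ne_of_ne, hij.symm]
  have hle := hx.sum_le_sum_of_eq_off y {i, j} fun l hl => by
    obtain ⟨hli, hlj⟩ : l ≠ i ∧ l ≠ j := by simpa using hl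
    simp [y, pairEdge, Equiv.swap_apply_of_ne_of_ne, hli, hlj]
  rw [sum_pair hij, sum_pair hij, hyi, hyj] at hle
  exact max_le (le_max_of_three_pow_le ((Nat.le_add_right _ _).trans hle))
    (le_max_of_three_pow_le ((Nat.le_add_left _ _).trans hle))

end Pairing

section Exposure

variable {V ι κ : Type*} {τ : Sym2 V → ℕ} {x : ι × Bool ↪ V} {i j : ι}

/-- Both endpoints of `e` lie on members, other than `e` itself, of the family `r` that are built
no later than `e`, where `τ` gives the time at which an edge is built. -/
def Exposed (τ : Sym2 V → ℕ) (r : κ → Sym2 V) (e : Sym2 V) : Prop :=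
  ∀ v ∈ e, ∃ l, v ∈ r l ∧ r l ≠ e ∧ τ (r l) ≤ τ e

/-- The exposing family of a pairing: all pair edges, together with one edge `s(v, g v)` for each
vertex `v` left unpaired. -/
def exposingEdge (x : ι × Bool ↪ V) (g : V → V) : ι ⊕ ↥(Set.range x)ᶜ → Sym2 V :=
  Sum.elim (pairEdge x) fun v => s(↑v, g v)

theorem pairEdge_mem_edgeSet (x : ι × Bool ↪ V) (i : ι) :
    pairEdge x i ∈ (⊤ : SimpleGraph V).edgeSet := by
  simp [pairEdge]

theorem exposingEdge_mem_edgeSet {g : V → V} (hg : ∀ v, v ≠ g v)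
    (l : ι ⊕ ↥(Set.range x)ᶜ) : exposingEdge x g l ∈ (⊤ : SimpleGraph V).edgeSet := by
  rcases l with i | v
  · exact pairEdge_mem_edgeSet x i
  · simpa [exposingEdge] using hg v

theorem exists_earliest_neighbor [Finite V] [Nontrivial V] (τ : Sym2 V → ℕ) (v : V) :
    ∃ w, v ≠ w ∧ ∀ u, v ≠ u → τ s(v, w) ≤ τ s(v, u) := by
  obtain ⟨u, hu⟩ := exists_ne v
  exact Set.exists_min_image {u | v ≠ u} (fun u => τ s(v, u)) (Set.toFinite _) ⟨u, hu.symm⟩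

theorem IsLightest.mem_range_of_not_exposed [Fintype ι] (hx : IsLightest τ x) {g : V → V}
    (hg : ∀ v w, v ≠ w → τ s(v, g v) ≤ τ s(v, w)) {v w : V} (hv : v ∉ Set.range x) (hvw : v ≠ w)
    (he : ¬ Exposed τ (exposingEdge x g) s(v, w)) :
    s(v, w) ∈ Set.range fun u : ↥(Set.range x)ᶜ => s(↑u, g u) := by
  by_contra hnotMem
  have hfirst {e : Sym2 V} (he : e = s(v, w)) (u u' : V) (hu : u ∉ Set.range x) (huu' : u ≠ u')
      (huv : s(u, u') = e) :
      ∃ l, u ∈ exposingEdge x g l ∧ exposingEdge x g l ≠ e ∧ τ (exposingEdge x g l) ≤ τ e :=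
    ⟨.inr ⟨u, hu⟩, Sym2.mem_mk_left _ _, fun h => hnotMem ⟨⟨u, hu⟩, h.trans he⟩,
      huv ▸ hg u u' huu'⟩
  refine he fun u hu => ?_
  obtain rfl | rfl := Sym2.mem_iff.1 hu
  · exact hfirst rfl u w hv hvw rfl
  by_cases hu : u ∈ Set.range x
  · obtain ⟨⟨i, p⟩, rfl⟩ := hu
    refine ⟨.inl i, ?_, fun h => hv ?_, hx.pairEdge_le_of_notMem_range hv i p⟩
    · simp [exposingEdge, pairEdge_eq x i p]
    · have hmem : v ∈ pairEdge x i := (show pairEdge x i = _ from h) ▸ Sym2.mem_mk_left _ _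
      obtain rfl | rfl := Sym2.mem_iff.1 hmem <;> exact Set.mem_range_self _
  · exact hfirst rfl u v hu hvw.symm Sym2.eq_swap

theorem lt_max_of_not_exposed {g : V → V} (hij : i ≠ j) (p q : Bool)
    (he : ¬ Exposed τ (exposingEdge x g) s(x (i, p), x (j, q))) :
    τ s(x (i, p), x (j, q)) < max (τ (pairEdge x i)) (τ (pairEdge x j)) := by
  have hne (l : ι) : pairEdge x l ≠ s(x (i, p), x (j, q)) := by
    simp only [pairEdge, ne_eq, Sym2.eq_iff, x.injective.eq_iff, Prod.mk.injEq]
    grind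
  by_contra! hmax
  obtain ⟨hi, hj⟩ := max_le_iff.1 hmax
  refine he fun v hv => ?_
  obtain rfl | rfl := Sym2.mem_iff.1 hv
  · exact ⟨.inl i, by simp [exposingEdge, pairEdge_eq x i p], hne i, hi⟩
  · exact ⟨.inl j, by simp [exposingEdge, pairEdge_eq x j q], hne j, hj⟩

theorem IsLightest.exposed_or_exposed_exchange [Fintype ι] (hx : IsLightest τ x) (g : V → V)
    (hij : i ≠ j) (p q : Bool) :
    Exposed τ (exposingEdge x g) s(x (i, p), x (j, q)) ∨
      Exposed τ (exposingEdge x g) s(x (i, !p), x (j, !q)) := by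
  by_contra! h
  exact (hx.max_pairEdge_le_max_exchange hij p q).not_gt
    (max_lt (lt_max_of_not_exposed hij p q h.1) (lt_max_of_not_exposed hij _ _ h.2))

/-- The edges between paired vertices, sorted into `|ι| ^ 2` slots of at most two edges: for
`i < j`, slot `(i, j)` holds the two edges joining equal members of pairs `i` and `j`, slot
`(j, i)` the two joining opposite members, and slot `(i, i)` the pair edge alone. -/
def slotEdge [LinearOrder ι] (x : ι × Bool → V) (z : ι × ι) (p : Bool) : Sym2 V :=
  s(x (z.1, p), x (z.2, p ^^ decide (z.2 ≤ z.1)))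

theorem exists_slotEdge_eq [LinearOrder ι] (x : ι × Bool → V) {a b : ι × Bool} (hab : a ≠ b) :
    ∃ z p, slotEdge x z p = s(x a, x b) := by
  wlog hle : a.1 ≤ b.1 generalizing a b
  · obtain ⟨z, p, h⟩ := this hab.symm (le_of_not_ge hle)
    exact ⟨z, p, h.trans Sym2.eq_swap⟩
  obtain ⟨i, p⟩ := a
  obtain ⟨j, q⟩ := b
  by_cases hpq : p = q
  · have hlt : i < j := lt_of_le_of_ne hle fun h => hab (Prod.ext h hpq)
    exact ⟨(i, j), p, by simp [slotEdge, hlt.not_ge, hpq]⟩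
  · have hpq : p = !q := Bool.eq_not_of_ne hpq
    exact ⟨(j, i), q, by simp [slotEdge, hpq, show i ≤ j from hle, Sym2.eq_swap]⟩

theorem IsLightest.exists_not_exposed_slotEdge_eq [Fintype ι] [LinearOrder ι]
    (hx : IsLightest τ x) (g : V → V) (z : ι × ι) :
    ∃ e, ∀ p, ¬ Exposed τ (exposingEdge x g) (slotEdge x z p) → slotEdge x z p = e := by
  obtain ⟨i, j⟩ := z
  by_cases hij : i = j
  · subst hij
    exact ⟨pairEdge x i, fun p _ => by simp [slotEdge, pairEdge_eq x i p]⟩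
  · obtain h | h : Exposed τ (exposingEdge x g) (slotEdge x (i, j) true) ∨
        Exposed τ (exposingEdge x g) (slotEdge x (i, j) false) := by
      simpa [slotEdge] using hx.exposed_or_exposed_exchange g hij true (!decide (j ≤ i))
    · exact ⟨slotEdge x (i, j) false, by simp [h]⟩
    · exact ⟨slotEdge x (i, j) true, by simp [h]⟩

theorem IsLightest.card_not_exposed_le [Fintype V] [DecidableEq V] [Fintype ι]
    [LinearOrder ι] (hx : IsLightest τ x) {g : V → V}
    (hg : ∀ v w, v ≠ w → τ s(v, g v) ≤ τ s(v, w)) :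
    #{e ∈ (⊤ : SimpleGraph V).edgeFinset | ¬ Exposed τ (exposingEdge x g) e}
      ≤ Fintype.card ι * Fintype.card ι + Fintype.card ↥(Set.range x)ᶜ := by
  choose f hf using hx.exists_not_exposed_slotEdge_eq g
  let late : ι × ι ⊕ ↥(Set.range x)ᶜ → Sym2 V := Sum.elim f fun v => s(↑v, g v)
  have hsub : {e ∈ (⊤ : SimpleGraph V).edgeFinset | ¬ Exposed τ (exposingEdge x g) e}
      ⊆ univ.image late := by
    intro e he
    induction e with | _ v w =>
    obtain ⟨hvw, he⟩ : v ≠ w ∧ ¬ Exposed τ (exposingEdge x g) s(v, w) := by simpa using he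
    rw [mem_image_univ_iff_mem_range]
    by_cases hv : v ∈ Set.range x
    · by_cases hw : w ∈ Set.range x
      · obtain ⟨a, rfl⟩ := hv
        obtain ⟨b, rfl⟩ := hw
        obtain ⟨z, p, hz⟩ := exists_slotEdge_eq x (a := a) (b := b) (by simpa using hvw)
        exact ⟨.inl z, (hf z p (hz ▸ he)).symm.trans hz⟩
      · rw [Sym2.eq_swap] at he ⊢
        obtain ⟨u, hu⟩ := hx.mem_range_of_not_exposed hg hw hvw.symm he
        exact ⟨.inr u, hu⟩
    · obtain ⟨u, hu⟩ := hx.mem_range_of_not_exposed hg hv hvw he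
      exact ⟨.inr u, hu⟩
  calc _ ≤ #(univ.image late) := card_le_card hsub
    _ ≤ Fintype.card (ι × ι ⊕ ↥(Set.range x)ᶜ) := card_image_le
    _ = _ := by rw [Fintype.card_sum, Fintype.card_prod]

theorem exists_exposing_family [Fintype V] [DecidableEq V] [Nontrivial V] (τ : Sym2 V → ℕ)
    {n k : ℕ} (hn : Fintype.card V = n) (hk : 2 * k ≤ n) :
    ∃ r : Fin (n - k) → Sym2 V, (∀ l, r l ∈ (⊤ : SimpleGraph V).edgeSet) ∧
      #{e ∈ (⊤ : SimpleGraph V).edgeFinset | ¬ Exposed τ r e} ≤ k * k + (n - 2 * k) := by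
  obtain ⟨x, hx⟩ := exists_isLightest (ι := Fin k) τ (by simpa [hn] using hk)
  choose g hgne hgmin using exists_earliest_neighbor τ
  have hrest : Fintype.card ↥(Set.range x)ᶜ = n - 2 * k := by
    rw [Fintype.card_compl_set, Set.card_range_of_injective x.injective, hn]
    simp [mul_comm]
  let φ : Fin (n - k) ≃ Fin k ⊕ ↥(Set.range x)ᶜ :=
    (Fintype.equivFinOfCardEq (by rw [Fintype.card_sum, hrest, Fintype.card_fin]; omega)).symm
  refine ⟨exposingEdge x g ∘ φ, fun l => exposingEdge_mem_edgeSet hgne _, ?_⟩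
  have hφ (e) : Exposed τ (exposingEdge x g ∘ φ) e ↔ Exposed τ (exposingEdge x g) e :=
    forall₂_congr fun _ _ => φ.exists_congr_left.trans (by simp)
  simpa only [hφ, Fintype.card_fin, hrest] using hx.card_not_exposed_le hgmin

end Exposure

section Prediction

variable {V κ : Type*} {edge : ℕ → Sym2 V}

/-- Someone told in advance to reveal the endpoints of the edges built at the times `θ` knows,
before turn `t` is played, both endpoints of the edge built at turn `t`. -/
def Predicted (edge : ℕ → Sym2 V) (θ : κ → ℕ) (t : ℕ) : Prop :=
  ∀ v ∈ edge t, ∃ j, θ j < t ∧ v ∈ edge (θ j)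

theorem predicted_congr {edge' : ℕ → Sym2 V} {θ : κ → ℕ} {t : ℕ}
    (h : ∀ i ≤ t, edge i = edge' i) : Predicted edge θ t ↔ Predicted edge' θ t := by
  unfold Predicted
  rw [h t le_rfl]
  exact forall₂_congr fun v _ => exists_congr fun j =>
    and_congr_right fun hj => by rw [h _ hj.le]

theorem predicted_of_exposed {S : Finset V} {τ : Sym2 S → ℕ} {E : Set (Sym2 S)}
    (hτ : ∀ e ∈ E, edge (τ e) = e.map (↑)) {r : κ → Sym2 S} (hr : ∀ l, r l ∈ E)
    {e : Sym2 S} (he : e ∈ E) (hexp : Exposed τ r e) :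
    Predicted edge (fun l => τ (r l)) (τ e) := by
  intro v hv
  rw [hτ e he] at hv
  obtain ⟨u, hu, rfl⟩ := Sym2.mem_map.1 hv
  obtain ⟨l, hul, hne, hle⟩ := hexp u hu
  refine ⟨l, lt_of_le_of_ne hle fun (heq : τ (r l) = τ e) => hne ?_, ?_⟩
  · exact Sym2.map.injective Subtype.val_injective (by rw [← hτ _ (hr l), ← hτ e he, heq])
  · rw [hτ _ (hr l)]
    exact Sym2.mem_map.2 ⟨u, hul, rfl⟩

theorem exists_eq_map_of_predicted (hloop : ∀ t, ¬ (edge t).IsDiag) {S : Finset V}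
    {θ : κ → ℕ} (hθ : ∀ l, ∀ v ∈ edge (θ l), v ∈ S) {t : ℕ} (ht : Predicted edge θ t) :
    ∃ e ∈ (⊤ : SimpleGraph S).edgeSet, edge t = e.map (↑) := by
  have hmem : ∀ v ∈ edge t, v ∈ S := fun v hv => by
    obtain ⟨l, -, hl⟩ := ht v hv
    exact hθ l v hl
  have hne := hloop t
  generalize edge t = e at hmem hne
  induction e with | _ a b =>
  exact ⟨s(⟨a, hmem a (Sym2.mem_mk_left a b)⟩, ⟨b, hmem b (Sym2.mem_mk_right a b)⟩),
    by simpa using hne, rfl⟩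

theorem exists_predictor_of_hasMonoClique (hinj : Function.Injective edge)
    (hloop : ∀ t, ¬ (edge t).IsDiag) {color : ℕ → Bool} {N n k : ℕ} {col : Bool} (hn : 2 ≤ n)
    (hk : 2 * k ≤ n) (hclique : HasMonoClique edge color N n col) :
    ∃ θ : Fin (n - k) → Fin N, (∀ t, Predicted edge (fun l => θ l) t → color t = col) ∧
      n.choose 2 - (k * k + (n - 2 * k)) ≤ #{t ∈ range N | Predicted edge (fun l => θ l) t} := by
  obtain ⟨S, hScard, hS⟩ := hclique
  have hVcard : Fintype.card S = n := (Fintype.card_coe S).trans hScard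
  have hbuilt : ∀ e ∈ (⊤ : SimpleGraph S).edgeSet,
      ∃ t, t < N ∧ edge t = e.map (↑) ∧ color t = col := by
    intro e he
    induction e with | _ u v =>
    exact hS u u.2 v v.2 fun h => he (Subtype.ext h)
  choose! τ hτN hτedge hτcol using hbuilt
  have : Nontrivial S := Fintype.one_lt_card_iff_nontrivial.1 (by omega)
  obtain ⟨r, hr, hlate⟩ := exists_exposing_family τ hVcard hk
  refine ⟨fun l => ⟨τ (r l), hτN _ (hr l)⟩, fun t ht => ?_, ?_⟩
  · have hθ : ∀ l, ∀ v ∈ edge (τ (r l)), v ∈ S := by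
      intro l v hv
      rw [hτedge _ (hr l)] at hv
      obtain ⟨u, -, rfl⟩ := Sym2.mem_map.1 hv
      exact u.2
    obtain ⟨e, he, hte⟩ := exists_eq_map_of_predicted hloop hθ ht
    rw [hinj (hte.trans (hτedge e he).symm), hτcol e he]
  · have hcard : #{e ∈ (⊤ : SimpleGraph S).edgeFinset | Exposed τ r e}
        ≤ #{t ∈ range N | Predicted edge (fun l => τ (r l)) t} := by
      refine card_le_card_of_injOn τ (fun e he => ?_) fun e he f hf hef => ?_
      · obtain ⟨he, hexp⟩ : e ∈ (⊤ : SimpleGraph S).edgeSet ∧ Exposed τ r e := by simpa using he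
        simpa [hτN e he] using predicted_of_exposed hτedge hr he hexp
      · have he : e ∈ (⊤ : SimpleGraph S).edgeSet := by simp_all
        have hf : f ∈ (⊤ : SimpleGraph S).edgeSet := by simp_all
        exact Sym2.map.injective Subtype.val_injective
          (by rw [← hτedge e he, ← hτedge f hf, hef])
    have hsplit := card_filter_add_card_filter_not (s := (⊤ : SimpleGraph S).edgeFinset)
      fun e => Exposed τ r e
    rw [SimpleGraph.card_edgeFinset_top_eq_card_choose_two, hVcard] at hsplit
    refine Nat.sub_le_of_le_add (hsplit.symm.trans_le ?_)
    exact add_le_add hcard hlate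

end Prediction

section Betting

theorem sum_prod_bets {α : Type*} [Fintype α] {R : Type*} [CommSemiring R] {s : R} (N : ℕ)
    (f : List α → α → R) (hf : ∀ h, ∑ a, f h a = s) :
    ∑ c : Fin N → α, ∏ t : Fin N, f ((List.ofFn c).take t) (c t) = s ^ N := by
  induction N generalizing f with
  | zero => simp
  | succ N ih =>
    have hrest (a : α) : ∑ c : Fin N → α, ∏ t : Fin N, f (a :: (List.ofFn c).take t) (c t)
        = s ^ N := ih (fun h => f (a :: h)) fun _ => hf _
    calc ∑ c : Fin (N + 1) → α, ∏ t : Fin (N + 1), f ((List.ofFn c).take t) (c t)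
        = ∑ z : α × (Fin N → α), ∏ t : Fin (N + 1),
            f ((List.ofFn (Fin.cons z.1 z.2 : Fin (N + 1) → α)).take t)
              ((Fin.cons z.1 z.2 : Fin (N + 1) → α) t) :=
          ((Fin.consEquiv fun _ : Fin (N + 1) => α).sum_comp _).symm
      _ = ∑ a, f [] a * ∑ c : Fin N → α, ∏ t : Fin N, f (a :: (List.ofFn c).take t) (c t) := by
          simp only [Fintype.sum_prod_type, Fin.prod_univ_succ, List.ofFn_succ, Fin.cons_zero,
            Fin.cons_succ, Fin.val_zero, List.take_zero, Fin.val_succ, List.take_succ_cons, mul_sum]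
      _ = s ^ (N + 1) := by
          simp only [hrest, ← sum_mul, hf, pow_succ']

theorem le_card_of_forall_exists_le_prod_bets {α Z : Type*} [Fintype α] [Nonempty α] [Fintype Z]
    {N M : ℕ} (f : Z → List α → α → ℕ) (hf : ∀ z h, ∑ a, f z h a = Fintype.card α)
    (hwin : ∀ c : Fin N → α, ∃ z, M ≤ ∏ t : Fin N, f z ((List.ofFn c).take t) (c t)) :
    M ≤ Fintype.card Z := by
  choose z hz using hwin
  refine Nat.le_of_mul_le_mul_left ?_ (pow_pos (Fintype.card_pos (α := α)) N)
  calc Fintype.card α ^ N * M = ∑ _c : Fin N → α, M := by simp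
    _ ≤ ∑ c : Fin N → α, ∑ z, ∏ t : Fin N, f z ((List.ofFn c).take t) (c t) :=
        sum_le_sum fun c _ => (hz c).trans <|
          single_le_sum (f := fun z => ∏ t : Fin N, f z ((List.ofFn c).take t) (c t))
            (fun _ _ => Nat.zero_le _) (mem_univ (z c))
    _ = ∑ z, ∑ c : Fin N → α, ∏ t : Fin N, f z ((List.ofFn c).take t) (c t) := sum_comm
    _ = Fintype.card α ^ N * Fintype.card Z := by
        simp only [sum_prod_bets N _ (hf _), sum_const, card_univ, smul_eq_mul, mul_comm]

/-- The factor by which a gambler's capital changes at a turn with outcome `b`: the whole capital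
is put on `col` if `A` holds, and nothing is put at stake otherwise. -/
noncomputable def stake (A : Prop) (col b : Bool) : ℕ := if A then if b = col then 2 else 0 else 1

theorem sum_stake (A : Prop) (col : Bool) : ∑ b, stake A col b = Fintype.card Bool := by
  by_cases hA : A <;> cases col <;> simp [stake, hA]

theorem prod_stake_eq_two_pow {N : ℕ} {A : ℕ → Prop} {col : Bool} {color : ℕ → Bool}
    (hwin : ∀ t, A t → color t = col) :
    ∏ t : Fin N, stake (A t) col (color t) = 2 ^ #{t ∈ range N | A t} := by
  have hfactor (t : ℕ) : stake (A t) col (color t) = if A t then 2 else 1 := by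
    by_cases ht : A t
    · simp [stake, ht, hwin t ht]
    · simp [stake, ht]
  rw [Fin.prod_univ_eq_prod_range fun t => stake (A t) col (color t)]
  simp only [hfactor, prod_ite, prod_const, one_pow, mul_one]

end Betting

section LowerBound

/-- The Painter who ignores Builder and colors the edges according to the list `l`. -/
def replay (l : List Bool) (h : List Bool) : Bool := l.getD h.length false

theorem histOf_replay {l : List Bool} {t : ℕ} (ht : t ≤ l.length) :
    histOf (replay l) t = l.take t := by
  induction t with
  | zero => simp [histOf]
  | succ t ih =>
    rw [histOf, ih (Nat.le_of_succ_le ht), List.take_succ_eq_append_getElem ht, replay,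
      List.length_take_of_le (Nat.le_of_succ_le ht), List.getD_eq_getElem _ _ ht]

theorem take_histOf (P : List Bool → Bool) {i t : ℕ} (hit : i ≤ t) :
    (histOf P t).take i = histOf P i := by
  induction t, hit using Nat.le_induction with
  | base => rw [List.take_of_length_le (length_histOf P i).le]
  | succ t hit ih =>
    rw [histOf, List.take_append_of_le_length (by rwa [length_histOf]), ih]

theorem ValidBuilder.injective_edge {V : Type*} {B : List Bool → Sym2 V} (hB : ValidBuilder B)
    (P : List Bool → Bool) : Function.Injective fun t => B (histOf P t) := by
  refine Function.Injective.of_lt_imp_ne fun i t hit => ?_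
  have hne := hB.2 (histOf P t) i (by rwa [length_histOf])
  rwa [take_histOf P hit.le] at hne

theorem BuilderWins.two_pow_le {n k N : ℕ} (hwin : BuilderWins n n N) (hn : 2 ≤ n)
    (hk : 2 * k ≤ n) : 2 ^ (n.choose 2 - (k * k + (n - 2 * k))) ≤ 2 * N ^ (n - k) := by
  obtain ⟨B, hB, hwin⟩ := hwin
  let bet : Bool × (Fin (n - k) → Fin N) → List Bool → Bool → ℕ := fun z h =>
    stake (Predicted (fun i => B (h.take i)) (fun l => z.2 l) h.length) z.1
  have hbet : ∀ z h, ∑ b, bet z h b = Fintype.card Bool := fun z h => sum_stake _ z.1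
  suffices ∀ c : Fin N → Bool, ∃ z, 2 ^ (n.choose 2 - (k * k + (n - 2 * k)))
      ≤ ∏ t : Fin N, bet z ((List.ofFn c).take t) (c t) by
    simpa using le_card_of_forall_exists_le_prod_bets bet hbet this
  intro c
  set P := replay (List.ofFn c)
  obtain ⟨col, hclique⟩ : ∃ col, HasMonoClique (fun t => B (histOf P t))
      (fun t => P (histOf P t)) N n col := (hwin P).elim (⟨_, ·⟩) (⟨_, ·⟩)
  obtain ⟨θ, hθ, hcard⟩ := exists_predictor_of_hasMonoClique (hB.injective_edge P)
    (fun t => hB.1 _) hn hk hclique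
  refine ⟨(col, θ), (Nat.pow_le_pow_right (by norm_num) hcard).trans_eq ?_⟩
  rw [← prod_stake_eq_two_pow hθ]
  refine prod_congr rfl fun t _ => ?_
  have hhist : (List.ofFn c).take t = histOf P t := (histOf_replay (by simp [t.2.le])).symm
  have hcolor : P (histOf P t) = c t := by simp [P, replay, length_histOf]
  have hpred : Predicted (fun i => B (histOf P i)) (fun l => θ l) t =
      Predicted (fun i => B ((histOf P t).take i)) (fun l => θ l) t :=
    propext (predicted_congr fun i hi => by rw [take_histOf P hi])
  simp only [bet, hcolor, hpred, hhist, length_histOf]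

end LowerBound

section Exponent

theorem sq_one_sub_sqrt_two_div_two :
    (1 - Real.sqrt 2 / 2) ^ 2 = 2 * (1 - Real.sqrt 2 / 2) - 1 / 2 := by
  have := Real.sq_sqrt (zero_le_two (α := ℝ))
  linear_combination this / 4

-- With `k = a n`, the ratio of the exponents `n ^ 2 / 2 - k ^ 2` and `n - k` is stationary when
-- `a ^ 2 = 2 * a - 1 / 2`, and its value is then `2 * a * n`.
theorem mul_sub_le_of_sq_eq {a n k : ℝ} (hsq : a ^ 2 = 2 * a - 1 / 2) (ha₀ : 0 ≤ a)
    (ha : a ≤ 3 / 10) (hn : 2 ≤ n) (hk₀ : 0 ≤ k) (hk : k ≤ a * n) (hk' : a * n < k + 1) :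
    (2 * (a * n) - 4) * (n - k) ≤ n * (n - 1) / 2 - (k * k + (n - 2 * k)) - 1 := by
  have hmain : (1 / 2 - a ^ 2) * n ^ 2 = 2 * (a * n) * (n - a * n) := by
    linear_combination n ^ 2 * hsq
  have hkk : k * k ≤ a ^ 2 * n ^ 2 := by
    rw [← mul_pow, ← sq]
    exact pow_le_pow_left₀ hk₀ hk 2
  have hround : 2 * (a * n) * (n - k) ≤ 2 * (a * n) * (n - a * n + 1) :=
    mul_le_mul_of_nonneg_left (by linarith) (by positivity)
  have han : a * n ≤ 3 / 10 * n := mul_le_mul_of_nonneg_right ha (by linarith)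
  linarith

theorem two_rpow_le_of_two_pow_le {r q N : ℕ} {y : ℝ} (hq : q ≠ 0) (h : 2 ^ r ≤ 2 * N ^ q)
    (hy : y * q ≤ r - 1) : (2 : ℝ) ^ y ≤ N := by
  refine le_of_pow_le_pow_left₀ hq N.cast_nonneg ?_
  calc ((2 : ℝ) ^ y) ^ q = 2 ^ (y * q) := by rw [Real.rpow_mul_natCast zero_le_two]
    _ ≤ 2 ^ ((r : ℝ) - 1) := Real.rpow_le_rpow_of_exponent_le one_le_two hy
    _ = 2 ^ r / 2 := by rw [Real.rpow_sub_one two_ne_zero, Real.rpow_natCast]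
    _ ≤ N ^ q := by
      rw [div_le_iff₀' two_pos]
      exact_mod_cast h

theorem BuilderWins.two_rpow_le {n N : ℕ} (hwin : BuilderWins n n N) (hn : 2 ≤ n) :
    (2 : ℝ) ^ ((2 - Real.sqrt 2) * n - 4) ≤ N := by
  set a := 1 - Real.sqrt 2 / 2 with ha_def
  have hsq : a ^ 2 = 2 * a - 1 / 2 := sq_one_sub_sqrt_two_div_two
  have ha₀ : 0 ≤ a := by nlinarith
  have ha : a ≤ 3 / 10 := by
    have : (7 / 5 : ℝ) ≤ Real.sqrt 2 := Real.le_sqrt_of_sq_le (by norm_num)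
    linarith
  have hn' : (2 : ℝ) ≤ n := by exact_mod_cast hn
  set k := ⌊a * n⌋₊
  have hk : (k : ℝ) ≤ a * n := Nat.floor_le (by positivity)
  have h2k : 2 * k ≤ n := by
    have : 2 * (k : ℝ) ≤ n := by nlinarith
    exact_mod_cast this
  refine two_rpow_le_of_two_pow_le (by omega) (hwin.two_pow_le hn h2k) ?_
  have hsub : (n.choose 2 : ℝ) ≤
      (n.choose 2 - (k * k + (n - 2 * k)) : ℕ) + (k * k + (n - 2 * k : ℕ) : ℕ) := by
    exact_mod_cast le_tsub_add
  push_cast [Nat.cast_choose_two, h2k] at hsub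
  rw [Nat.cast_sub (by omega), show 2 - Real.sqrt 2 = 2 * a by ring]
  linarith [mul_sub_le_of_sq_eq hsq ha₀ ha hn' k.cast_nonneg hk (Nat.lt_floor_add_one _)]

end Exponent

theorem stmt1 :
    ∃ C : ℝ, 0 < C ∧ ∀ n : ℕ, 3 ≤ n →
      (2 : ℝ) ^ ((2 - Real.sqrt 2) * (n : ℝ) - C) ≤ (onlineRamsey n n : ℝ) := by
  refine ⟨4, by norm_num, fun n hn => ?_⟩
  have hwin : BuilderWins n n (onlineRamsey n n) := Nat.sInf_mem (exists_builderWins n n)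
  exact hwin.two_rpow_le (by omega)

end OnlineRamseyGame
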